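/- The logic ⊩_⊞ permits cancellation: if (X_k)_{k∈K} and (Y_k)_{k∈K} are families of sets of formulas such that for i ≠ j the variables occurring in X_i ∪ Y_i are disjoint from those occurring in X_j ∪ Y_j, and ⋃_k X_k ⊩_⊞ ⋃_k Y_k, then X_i ⊩_⊞ Y_i for some index i. -/

import Mathlib

/-- Formulas built from countably many propositional variables with a single
binary connective `⊞` (platypus). -/
inductive Fm : Type where
  | var : ℕ → Fm
  | pl : Fm → Fm → Fm
deriving DecidableEq

namespace Fm

/-- The set of propositional variables occurring in a formula. -/
def vars : Fm → Set ℕ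
  | var n => {n}
  | pl a b => vars a ∪ vars b

/-- A `𝔅_⊞`-valuation: a two-valued function such that
`v (φ ⊞ ψ) ∈ {min (v φ) (v ψ), max (v φ) (v ψ)}`. -/
def IsVal (v : Fm → Bool) : Prop :=
  ∀ a b : Fm, v (a.pl b) = (v a && v b) ∨ v (a.pl b) = (v a || v b)

/-- The multiple-conclusion consequence `Γ ⊩_⊞ Δ`. -/
def Mc (Γ Δ : Set Fm) : Prop :=
  ∀ v : Fm → Bool, IsVal v → (∀ φ ∈ Γ, v φ = true) → ∃ ψ ∈ Δ, v ψ = true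

/-- The single-conclusion consequence `Γ ⊢_⊞ φ`. -/
def Sc (Γ : Set Fm) (φ : Fm) : Prop := Mc Γ {φ}

end Fm

open Classical in
/-- Glue a family of valuations along predicates. -/
noncomputable def platGlue {K : Type} (p : K → Fm → Prop) (u : K → Fm → Bool) : Fm → Bool
  | Fm.var n => if h : ∃ i, p i (Fm.var n) then u h.choose (Fm.var n) else false
  | Fm.pl a b => if h : ∃ i, p i (Fm.pl a b) then u h.choose (Fm.pl a b)
      else (platGlue p u a && platGlue p u b)

theorem platGlue_eq {K : Type} (p : K → Fm → Prop) (u : K → Fm → Bool)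
    (huniq : ∀ i j φ, p i φ → p j φ → i = j) (i : K) (φ : Fm) (hp : p i φ) :
    platGlue p u φ = u i φ := by
  have h : ∃ i, p i φ := ⟨i, hp⟩
  have e : h.choose = i := huniq _ _ _ h.choose_spec hp
  cases φ with
  | var n => rw [platGlue, dif_pos h, e]
  | pl a b => rw [platGlue, dif_pos h, e]

theorem Fm.vars_nonempty' (φ : Fm) : φ.vars.Nonempty := by
  induction φ with
  | var n => exact ⟨n, rfl⟩
  | pl a b iha ihb => exact iha.mono Set.subset_union_left

open Fm in
/-- `⊩_⊞` permits cancellation: for families `(X k)`, `(Y k)` of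
sets of formulas with pairwise disjoint variables, if `⋃ k, X k ⊩_⊞ ⋃ k, Y k`
then `X i ⊩_⊞ Y i` for some `i`. -/
theorem platypus_cancellation {K : Type} (X Y : K → Set Fm)
    (hdisj : ∀ i j : K, i ≠ j →
      (⋃ φ ∈ X i ∪ Y i, φ.vars) ∩ (⋃ φ ∈ X j ∪ Y j, φ.vars) = ∅)
    (h : Mc (⋃ k, X k) (⋃ k, Y k)) :
    ∃ i, Mc (X i) (Y i) := by
  by_contra hcon
  have hc : ∀ i, ∃ v : Fm → Bool, IsVal v ∧ (∀ φ ∈ X i, v φ = true) ∧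
      ∀ ψ ∈ Y i, v ψ ≠ true := by
    intro i
    by_contra hi
    refine hcon ⟨i, fun v hv hX => ?_⟩
    by_contra hY
    exact hi ⟨v, hv, hX, fun ψ hψ e => hY ⟨ψ, hψ, e⟩⟩
  choose u hu hX hY using hc
  let p : K → Fm → Prop := fun i φ => φ.vars ⊆ ⋃ χ ∈ X i ∪ Y i, χ.vars
  have huniq : ∀ i j φ, p i φ → p j φ → i = j := by
    intro i j φ hi hj
    by_contra hij
    obtain ⟨n, hn⟩ := Fm.vars_nonempty' φ
    have : n ∈ (∅ : Set ℕ) := hdisj i j hij ▸ ⟨hi hn, hj hn⟩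
    exact this
  have hmem : ∀ i φ, φ ∈ X i ∪ Y i → p i φ := fun i φ hφ =>
    Set.subset_biUnion_of_mem (u := fun χ : Fm => χ.vars) hφ
  have hval : IsVal (platGlue p u) := by
    intro a b
    by_cases hh : ∃ i, p i (a.pl b)
    · obtain ⟨i, hi⟩ := hh
      have ha : p i a := Set.subset_union_left.trans hi
      have hb : p i b := Set.subset_union_right.trans hi
      rw [platGlue_eq p u huniq i _ hi, platGlue_eq p u huniq i _ ha,
        platGlue_eq p u huniq i _ hb]
      exact hu i a b
    · left
      rw [platGlue, dif_neg hh]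
  obtain ⟨ψ, hψ, e⟩ := h _ hval (by
    intro φ hφ
    obtain ⟨i, hi⟩ := Set.mem_iUnion.1 hφ
    rw [platGlue_eq p u huniq i _ (hmem i φ (Or.inl hi))]
    exact hX i φ hi)
  obtain ⟨i, hi⟩ := Set.mem_iUnion.1 hψ
  rw [platGlue_eq p u huniq i _ (hmem i ψ (Or.inr hi))] at e
  exact hY i ψ hi e
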